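/- Let n ≥ 1, let ρ, σ be n×n complex density matrices (Hermitian, positive semidefinite, trace 1), let S be the swap operator on ℂⁿ⊗ℂⁿ, and let 0 < Δt ≤ 1. Then, in the ℓ²→ℓ² operator norm, ‖ Tr₁[exp(−i Δt S)(ρ⊗σ)exp(i Δt S)] − exp(−i Δt ρ) σ exp(i Δt ρ) ‖ ≤ 6·Δt². In particular, one step of the swap-based density matrix exponentiation protocol approximates conjugation by exp(−i Δt ρ) to second order in Δt. -/

import Mathlib

open Matrix
open scoped Kronecker Matrix.Norms.L2Operator ComplexOrder

/-- The swap operator `S` on `ℂⁿ ⊗ ℂⁿ`, with entries `S[(i,j),(k,l)] = δ_{i,l} δ_{j,k}`. -/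
noncomputable def swapOp (n : ℕ) : Matrix (Fin n × Fin n) (Fin n × Fin n) ℂ :=
  Matrix.of fun p q => if p.1 = q.2 ∧ p.2 = q.1 then 1 else 0

/-- Partial trace over the first tensor factor:
`(Tr₁ M)[j,l] = Σ_i M[(i,j),(i,l)]`. -/
noncomputable def ptrace1 {n : ℕ} (M : Matrix (Fin n × Fin n) (Fin n × Fin n) ℂ) :
    Matrix (Fin n) (Fin n) ℂ :=
  Matrix.of fun j l => ∑ i : Fin n, M (i, j) (i, l)

section Aux
variable {A : Type*} [CStarAlgebra A]

lemma aux_norm_exp_le (x : A) (hx : star x = -x) (t : ℝ) :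
    ‖NormedSpace.exp (t • x)‖ ≤ 1 := by
  have h : NormedSpace.exp (t • x) ∈ unitary A := by
    let _ : NormedAlgebra ℚ A := NormedAlgebra.restrictScalars ℚ ℂ A
    apply NormedSpace.exp_mem_unitary_of_mem_skewAdjoint
    rw [skewAdjoint.mem_iff]
    simp [hx]
  nontriviality A
  exact (CStarRing.norm_of_mem_unitary h).le

lemma aux_exp_sub_one (x : A) (hx : star x = -x) (hn : ‖x‖ ≤ 1) (t : ℝ) (ht : 0 ≤ t) :
    ‖NormedSpace.exp (t • x) - 1‖ ≤ t := by
  have hd : ∀ u : ℝ, HasDerivAt (fun u : ℝ => NormedSpace.exp (u • x) - 1)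
      (NormedSpace.exp (u • x) * x) u := fun u =>
    (hasDerivAt_exp_smul_const (𝕂 := ℝ) x u).sub_const 1
  refine image_norm_le_of_norm_deriv_right_le_deriv_boundary (a := 0) (b := t)
    (B := fun u => u) (B' := fun _ => 1)
    (fun u _ => (hd u).continuousAt.continuousWithinAt)
    (fun u _ => (hd u).hasDerivWithinAt) (by simp) (fun u => hasDerivAt_id u) ?_ ⟨ht, le_rfl⟩
  intro u _
  calc _ ≤ ‖NormedSpace.exp (u • x)‖ * ‖x‖ := norm_mul_le _ _
    _ ≤ 1 * 1 := by gcongr; exact aux_norm_exp_le x hx u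
    _ = 1 := by norm_num

lemma aux_exp_sub_one_sub (x : A) (hx : star x = -x) (hn : ‖x‖ ≤ 1) (t : ℝ) (ht : 0 ≤ t) :
    ‖NormedSpace.exp (t • x) - 1 - t • x‖ ≤ t ^ 2 / 2 := by
  have hd : ∀ u : ℝ, HasDerivAt (fun u : ℝ => NormedSpace.exp (u • x) - 1 - u • x)
      (NormedSpace.exp (u • x) * x - (1 : ℝ) • x) u := fun u =>
    ((hasDerivAt_exp_smul_const (𝕂 := ℝ) x u).sub_const 1).sub
      ((hasDerivAt_id u).smul_const x)
  refine image_norm_le_of_norm_deriv_right_le_deriv_boundary (a := 0) (b := t)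
    (B := fun u => u ^ 2 / 2) (B' := fun u => u)
    (fun u _ => (hd u).continuousAt.continuousWithinAt)
    (fun u _ => (hd u).hasDerivWithinAt) (by simp) (fun u => ?_) ?_ ⟨ht, le_rfl⟩
  · have := ((hasDerivAt_id u).pow 2).div_const 2
    simpa using this
  intro u hu
  have e : NormedSpace.exp (u • x) * x - (1 : ℝ) • x = (NormedSpace.exp (u • x) - 1) * x := by
    rw [sub_mul, one_mul, one_smul]
  rw [e]
  calc _ ≤ ‖NormedSpace.exp (u • x) - 1‖ * ‖x‖ := norm_mul_le _ _
    _ ≤ u * 1 := by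
        gcongr
        · exact hu.1
        · exact aux_exp_sub_one x hx hn u hu.1
    _ = u := by ring

lemma aux_exp_invol (x : A) (hx : x * x = -1) (t : ℝ) :
    NormedSpace.exp (t • x) = Real.cos t • (1 : A) + Real.sin t • x := by
  let f := Complex.liftAux x hx
  have hf : Continuous f := f.toLinearMap.continuous_of_finiteDimensional
  let _ : Algebra ℚ A := Algebra.compHom A (algebraMap ℚ ℂ)
  have h := NormedSpace.map_exp f hf ((t : ℂ) * Complex.I)
  rw [← Complex.exp_eq_exp_ℂ] at h
  simp only [f, Complex.liftAux_apply, Complex.exp_ofReal_mul_I_re,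
    Complex.exp_ofReal_mul_I_im] at h
  simp only [Complex.mul_re, Complex.mul_im, Complex.I_re, Complex.I_im, Complex.ofReal_re,
    Complex.ofReal_im, mul_zero, mul_one, zero_mul, sub_zero, add_zero, map_zero, zero_add] at h
  rw [← h, Algebra.algebraMap_eq_smul_one]

end Aux

lemma aux_norm_density {n : ℕ} (ρ : Matrix (Fin n) (Fin n) ℂ)
    (hρ : ρ.PosSemidef) (hρtr : ρ.trace = 1) : ‖ρ‖ ≤ 1 := by
  open scoped MatrixOrder in
  rw [CStarAlgebra.norm_le_one_iff_of_nonneg ρ hρ.nonneg]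
  have hsa : IsSelfAdjoint ρ := hρ.1
  rw [← map_one (algebraMap ℝ (Matrix (Fin n) (Fin n) ℂ))]
  refine le_algebraMap_of_spectrum_le ?_ hsa
  intro x hx
  rw [hρ.1.spectrum_real_eq_range_eigenvalues] at hx
  obtain ⟨i, rfl⟩ := hx
  have h1 : ∑ i, hρ.1.eigenvalues i = 1 := by
    have := hρ.1.trace_eq_sum_eigenvalues
    rw [hρtr] at this
    have h := congrArg Complex.re this
    simpa using h.symm
  rw [← h1]
  exact Finset.single_le_sum (fun j _ => hρ.eigenvalues_nonneg j) (Finset.mem_univ i)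

lemma aux_swap_mul {n : ℕ} (M : Matrix (Fin n × Fin n) (Fin n × Fin n) ℂ) :
    swapOp n * M = M.submatrix Prod.swap id := by
  ext ⟨a, b⟩ q
  simp only [swapOp, Matrix.mul_apply, Matrix.of_apply, Matrix.submatrix_apply, id]
  rw [Finset.sum_eq_single (b, a)]
  · simp
  · rintro ⟨c, d⟩ _ h
    rw [if_neg, zero_mul]
    rintro ⟨h1, h2⟩
    exact h (by simp_all)
  · simp

lemma aux_mul_swap {n : ℕ} (M : Matrix (Fin n × Fin n) (Fin n × Fin n) ℂ) :
    M * swapOp n = M.submatrix id Prod.swap := by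
  ext q ⟨a, b⟩
  simp only [swapOp, Matrix.mul_apply, Matrix.of_apply, Matrix.submatrix_apply, id]
  rw [Finset.sum_eq_single (b, a)]
  · simp
  · rintro ⟨c, d⟩ _ h
    rw [if_neg, mul_zero]
    rintro ⟨h1, h2⟩
    exact h (by simp_all)
  · simp

lemma aux_swap_sq (n : ℕ) : swapOp n * swapOp n = 1 := by
  rw [aux_swap_mul]
  ext ⟨a, b⟩ ⟨c, d⟩
  simp only [swapOp, Matrix.of_apply, Matrix.submatrix_apply, id, Matrix.one_apply,
    Prod.swap, Prod.mk.injEq]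
  simp only [and_comm]

lemma aux_ptrace {n : ℕ} (ρ σ : Matrix (Fin n) (Fin n) ℂ) (hρ : ρ.trace = 1) (hσ : σ.trace = 1)
    (c s : ℂ) :
    ptrace1 ((c • 1 - s • swapOp n) * (ρ ⊗ₖ σ) * (c • 1 + s • swapOp n)) =
      (c ^ 2) • σ - (s ^ 2) • ρ - (s * c) • (ρ * σ - σ * ρ) := by
  have e : (c • 1 - s • swapOp n) * (ρ ⊗ₖ σ) * (c • 1 + s • swapOp n) =
      (c ^ 2) • (ρ ⊗ₖ σ) - (s ^ 2) • (swapOp n * (ρ ⊗ₖ σ) * swapOp n)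
       - (s * c) • (swapOp n * (ρ ⊗ₖ σ) - (ρ ⊗ₖ σ) * swapOp n) := by
    simp only [sub_mul, mul_add, smul_mul_assoc, mul_smul_comm, one_mul, mul_one, smul_sub,
      smul_smul, smul_add]
    ring_nf
    module
  rw [e, aux_swap_mul, aux_mul_swap, aux_mul_swap]
  ext j l
  simp only [ptrace1, Matrix.of_apply, Matrix.sub_apply, Matrix.smul_apply, smul_eq_mul,
    Matrix.submatrix_apply, Matrix.kroneckerMap_apply, id, Prod.swap, Matrix.mul_apply,
    Finset.sum_sub_distrib, ← Finset.mul_sum, ← Finset.sum_mul]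
  have h1 : ∑ i, ρ i i = 1 := hρ
  have h2 : ∑ i, σ i i = 1 := hσ
  rw [h1, h2]
  simp only [one_mul, mul_one, mul_comm (ρ _ l)]

set_option maxHeartbeats 1000000 in
/-- One step of the swap-based density matrix exponentiation protocol approximates
conjugation by `exp(−iΔtρ)` to second order in `Δt`:
`‖Tr₁[exp(−iΔtS)(ρ⊗σ)exp(iΔtS)] − exp(−iΔtρ) σ exp(iΔtρ)‖ ≤ 6·Δt²` in the
ℓ²→ℓ² operator norm. -/
theorem ptrace1_exp_swap_conj_approx_exp_conj {n : ℕ} (hn : 1 ≤ n)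
    (ρ σ : Matrix (Fin n) (Fin n) ℂ)
    (hρ : ρ.PosSemidef) (hρtr : ρ.trace = 1)
    (hσ : σ.PosSemidef) (hσtr : σ.trace = 1)
    (Δt : ℝ) (hΔt0 : 0 < Δt) (hΔt1 : Δt ≤ 1) :
    ‖ptrace1 (NormedSpace.exp ((-(Complex.I * (Δt : ℂ))) • swapOp n) * (ρ ⊗ₖ σ) *
          NormedSpace.exp ((Complex.I * (Δt : ℂ)) • swapOp n)) -
        NormedSpace.exp ((-(Complex.I * (Δt : ℂ))) • ρ) * σ *
          NormedSpace.exp ((Complex.I * (Δt : ℂ)) • ρ)‖ ≤ 6 * Δt ^ 2 := by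
  have key : ∀ {m : Type} [Fintype m] [DecidableEq m] (M : Matrix m m ℂ) (a : ℂ),
      (a * (Δt : ℂ)) • M = Δt • (a • M) := by
    intro m _ _ M a
    ext i j
    simp only [Matrix.smul_apply, smul_eq_mul, Complex.real_smul]
    ring
  have hI : (Complex.I • swapOp n) * (Complex.I • swapOp n) = -1 := by
    rw [smul_mul_smul_comm, aux_swap_sq, Complex.I_mul_I, neg_one_smul]
  have hI' : ((-Complex.I) • swapOp n) * ((-Complex.I) • swapOp n) = -1 := by
    rw [smul_mul_smul_comm, aux_swap_sq, neg_mul_neg, Complex.I_mul_I, neg_one_smul]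
  have hnρ := aux_norm_density ρ hρ hρtr
  have hnσ := aux_norm_density σ hσ hσtr
  have hstar : star ρ = ρ := hρ.1
  set t := Δt
  set c := Real.cos t with hc
  set s := Real.sin t with hs
  have E1 : NormedSpace.exp ((Complex.I * (t : ℂ)) • swapOp n) =
      (c : ℂ) • 1 + (Complex.I * s) • swapOp n := by
    rw [key, aux_exp_invol _ hI]
    ext i j
    simp only [Matrix.add_apply, Matrix.smul_apply, smul_eq_mul, Complex.real_smul]
    ring
  have E2 : NormedSpace.exp ((-(Complex.I * (t : ℂ))) • swapOp n) =
      (c : ℂ) • 1 - (Complex.I * s) • swapOp n := by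
    rw [← neg_mul, key, aux_exp_invol _ hI']
    ext i j
    simp only [Matrix.add_apply, Matrix.sub_apply, Matrix.smul_apply, smul_eq_mul,
      Complex.real_smul]
    ring
  rw [E1, E2, aux_ptrace ρ σ hρtr hσtr, ← neg_mul, key, key]
  set x := Complex.I • ρ with hxdef
  have hnx : (-Complex.I) • ρ = -x := by rw [hxdef, neg_smul]
  rw [hnx]
  have hx : star x = -x := by
    rw [hxdef, star_smul, hstar]; simp
  have hx' : star (-x) = -(-x) := by rw [star_neg, hx]
  have hxn : ‖x‖ ≤ 1 := by rw [hxdef, norm_smul]; simpa using hnρ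
  have hxn' : ‖-x‖ ≤ 1 := by rwa [norm_neg]
  have hE := aux_norm_exp_le x hx t
  have hE' := aux_norm_exp_le (-x) hx' t
  have hA := aux_exp_sub_one_sub x hx hxn t hΔt0.le
  have hA' := aux_exp_sub_one_sub (-x) hx' hxn' t hΔt0.le
  set E := NormedSpace.exp (t • x)
  set E' := NormedSpace.exp (t • (-x))
  set B := E - 1 - t • x with hB
  set B' := E' - 1 - t • (-x) with hB'
  have hsplit : ((c : ℂ) ^ 2) • σ - ((Complex.I * s) ^ 2) • ρ -
      ((Complex.I * s) * c) • (ρ * σ - σ * ρ) - E' * σ * E =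
      (s ^ 2) • (ρ - σ) + (t - s * c) • (x * σ - σ * x)
      - (B' * σ * E + E' * σ * B - B' * σ * B - (t ^ 2) • (x * σ * x)) := by
    have e1 : E = B + 1 + t • x := by rw [hB]; abel
    have e2 : E' = B' + 1 - t • x := by rw [hB', smul_neg]; abel
    have e3 : ((c : ℂ) ^ 2) • σ - ((Complex.I * s) ^ 2) • ρ -
      ((Complex.I * s) * c) • (ρ * σ - σ * ρ) = 
      (1 - s ^ 2) • σ + (s ^ 2) • ρ - (s * c) • (x * σ - σ * x) := by
      have hcs : (c : ℂ) ^ 2 = 1 - (s : ℂ) ^ 2 := by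
        have : c ^ 2 = 1 - s ^ 2 := by rw [hc, hs, Real.cos_sq']
        exact_mod_cast this
      rw [hcs, mul_pow, Complex.I_sq, hxdef]
      simp only [smul_mul_assoc, mul_smul_comm]
      ext i j
      simp only [Matrix.add_apply, Matrix.sub_apply, Matrix.smul_apply, smul_eq_mul,
        Complex.real_smul]
      push_cast
      ring
    rw [e3, e1, e2]
    simp only [sub_mul, add_mul, mul_add, mul_sub, smul_mul_assoc, mul_smul_comm, one_mul, mul_one,
      smul_sub, smul_add]
    module
  rw [hsplit]
  have n3 : ∀ a b : Matrix (Fin n) (Fin n) ℂ, ‖a * σ * b‖ ≤ ‖a‖ * ‖b‖ := by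
    intro a b
    calc ‖a * σ * b‖ ≤ ‖a‖ * ‖σ‖ * ‖b‖ := (norm_mul_le _ _).trans (by gcongr; exact norm_mul_le _ _)
      _ ≤ ‖a‖ * 1 * ‖b‖ := by gcongr
      _ = _ := by ring
  have b1 : ‖(s ^ 2) • (ρ - σ)‖ ≤ 2 * t ^ 2 := by
    rw [norm_smul, Real.norm_of_nonneg (sq_nonneg _)]
    have h1 : ‖ρ - σ‖ ≤ 2 := (norm_sub_le _ _).trans (by linarith)
    have h2 : s ^ 2 ≤ t ^ 2 := Real.sin_sq_le_sq
    nlinarith [norm_nonneg (ρ - σ), sq_nonneg s]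
  have hsc1 : s * c ≤ t := by
    have : s ≤ t := Real.sin_le hΔt0.le
    have hc1 : c ≤ 1 := Real.cos_le_one t
    have hs0 : 0 ≤ s := Real.sin_nonneg_of_nonneg_of_le_pi hΔt0.le (by linarith [Real.pi_gt_three])
    nlinarith
  have hsc2 : t - s * c ≤ 2 / 3 * t ^ 2 := by
    have h1 : t - t ^ 3 / 6 < s := Real.sin_gt_sub_cube hΔt0
    have h2 : 1 - t ^ 2 / 2 ≤ c := Real.one_sub_sq_div_two_le_cos
    have h3 : (t - t ^ 3 / 6) * (1 - t ^ 2 / 2) ≤ s * c := by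
      apply mul_le_mul h1.le h2
      · nlinarith
      · exact Real.sin_nonneg_of_nonneg_of_le_pi hΔt0.le (by linarith [Real.pi_gt_three])
    have h4 : t ^ 3 ≤ t ^ 2 := pow_le_pow_of_le_one hΔt0.le hΔt1 (by norm_num)
    have h5 : 0 ≤ t ^ 5 := by positivity
    nlinarith
  have b2 : ‖(t - s * c) • (x * σ - σ * x)‖ ≤ 4 / 3 * t ^ 2 := by
    rw [norm_smul, Real.norm_of_nonneg (by linarith)]
    have h1 : ‖x * σ - σ * x‖ ≤ 2 := by
      have := n3 x 1
      have h2 : ‖x * σ‖ ≤ 1 := (norm_mul_le _ _).trans (mul_le_one₀ hxn (norm_nonneg _) hnσ)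
      have h3 : ‖σ * x‖ ≤ 1 := (norm_mul_le _ _).trans (mul_le_one₀ hnσ (norm_nonneg _) hxn)
      exact (norm_sub_le _ _).trans (by linarith)
    nlinarith [norm_nonneg (x * σ - σ * x)]
  have b3 : ‖B' * σ * E‖ ≤ t ^ 2 / 2 := (n3 _ _).trans (by nlinarith [norm_nonneg B'])
  have b4 : ‖E' * σ * B‖ ≤ t ^ 2 / 2 := (n3 _ _).trans (by nlinarith [norm_nonneg B])
  have b5 : ‖B' * σ * B‖ ≤ t ^ 2 / 4 := by
    refine (n3 _ _).trans ?_
    have h1 : t ^ 2 / 2 ≤ 1 / 2 := by nlinarith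
    calc ‖B'‖ * ‖B‖ ≤ (t ^ 2 / 2) * (1 / 2) := by gcongr; exact hA.trans h1
      _ = _ := by ring
  have b6 : ‖(t ^ 2) • (x * σ * x)‖ ≤ t ^ 2 := by
    rw [norm_smul, Real.norm_of_nonneg (sq_nonneg _)]
    have h1 : ‖x * σ * x‖ ≤ 1 := (n3 _ _).trans (mul_le_one₀ hxn (norm_nonneg _) hxn)
    nlinarith [sq_nonneg t]
  have T1 := norm_sub_le ((s ^ 2) • (ρ - σ) + (t - s * c) • (x * σ - σ * x))
    (B' * σ * E + E' * σ * B - B' * σ * B - (t ^ 2) • (x * σ * x))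
  have T2 := norm_add_le ((s ^ 2) • (ρ - σ)) ((t - s * c) • (x * σ - σ * x))
  have T3 := norm_sub_le (B' * σ * E + E' * σ * B - B' * σ * B) ((t ^ 2) • (x * σ * x))
  have T4 := norm_sub_le (B' * σ * E + E' * σ * B) (B' * σ * B)
  have T5 := norm_add_le (B' * σ * E) (E' * σ * B)
  nlinarith [sq_nonneg t]
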